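/- Let Λ be a finite simple graph, u a vertex of Λ of degree at least 2, and w₁, w₂ two distinct vertices adjacent to u. Then there is an injective group homomorphism from G(Λ) into G(Λ_u⁺(w₁,w₂)). -/

import Mathlib

open SimpleGraph

/-- The set of commutator relations of a graph: one commutator for each edge. -/
def raagRels {V : Type} (G : SimpleGraph V) : Set (FreeGroup V) :=
  {r | ∃ u v : V, G.Adj u v ∧
    r = FreeGroup.of u * FreeGroup.of v * (FreeGroup.of u)⁻¹ * (FreeGroup.of v)⁻¹}

/-- The right-angled Artin group `A(G)` of a graph `G`. -/
abbrev RAAG {V : Type} (G : SimpleGraph V) : Type := PresentedGroup (raagRels G)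

/-- `G(Γ) = A(Γᶜ)`, the RAAG on the complement graph. -/
abbrev GG {V : Type} (G : SimpleGraph V) : Type := RAAG Gᶜ

/-- A linear forest: an acyclic graph all of whose vertices have degree at most 2. -/
def IsLinearForest {V : Type} (G : SimpleGraph V) : Prop :=
  G.IsAcyclic ∧ ∀ v : V, (G.neighborSet v).ncard ≤ 2

/-- The star of a vertex: the vertex together with its neighbours. -/
def starSet {V : Type} (G : SimpleGraph V) (v : V) : Set V :=
  insert v (G.neighborSet v)

/-- The double `D_v(G)` of `G` along the star of `v`: original vertices together with
copies of the vertices outside the star. -/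
def GraphDouble {V : Type} (G : SimpleGraph V) (v : V) :
    SimpleGraph (V ⊕ {w : V // w ∉ starSet G v}) :=
  SimpleGraph.fromRel (fun x y =>
    match x, y with
    | Sum.inl a, Sum.inl b => G.Adj a b
    | Sum.inr a, Sum.inr b => G.Adj a.1 b.1
    | Sum.inl a, Sum.inr b => a ∈ starSet G v ∧ G.Adj a b.1
    | Sum.inr _, Sum.inl _ => False)

/-- Subdivision of the edge `[v,w]` of `Λ`, with `none` as the new vertex. -/
def SubdivEdge {V : Type} (Λ : SimpleGraph V) (v w : V) : SimpleGraph (Option V) :=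
  SimpleGraph.fromRel (fun x y =>
    match x, y with
    | some a, some b => Λ.Adj a b ∧ ¬((a = v ∧ b = w) ∨ (a = w ∧ b = v))
    | some a, none => a = v ∨ a = w
    | none, some _ => False
    | none, none => False)

/-- The graph `Λ_u⁻(w₁,w₂)`, with `none` as the new vertex `v`. -/
def MinusGraph {V : Type} (Λ : SimpleGraph V) (u w₁ w₂ : V) : SimpleGraph (Option V) :=
  SimpleGraph.fromRel (fun x y =>
    match x, y with
    | some a, some b => Λ.Adj a b ∧
        ¬((a = u ∧ b = w₁) ∨ (a = w₁ ∧ b = u) ∨ (a = u ∧ b = w₂) ∨ (a = w₂ ∧ b = u))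
    | some a, none => a = w₁ ∨ a = u ∨ a = w₂
    | none, some _ => False
    | none, none => False)

/-- The graph `Λ_u⁺(w₁,w₂)`: `Λ_u⁻(w₁,w₂)` with the edge `[u,w₂]` added back. -/
def PlusGraph {V : Type} (Λ : SimpleGraph V) (u w₁ w₂ : V) : SimpleGraph (Option V) :=
  SimpleGraph.fromRel (fun x y =>
    (MinusGraph Λ u w₁ w₂).Adj x y ∨ (x = some u ∧ y = some w₂))

/-!
Conjugating some of the generators by a new letter `v` destroys exactly those commutations that
join them to unconjugated generators not commuting with `v`. In the complement of
`Λ_u⁺(w₁,w₂)` the vertices `u` and `w₁` are adjacent and the new vertex `v` is joined to everything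
except `u`, `w₁`, `w₂`; hence `u ↦ v u v⁻¹`, with all other generators fixed, maps `G(Λ)` to
`G(Λ_u⁺(w₁,w₂))`.

Injectivity is detected in the wreath product of `G = G(Λ)` with a group of order two: send `v` to
the swap of `G × G`, the vertex `u` to `(1, u)`, the vertices `w₁`, `w₂` to `(w₁, 1)`, `(w₂, 1)`
and any other vertex `a` to `(a, a)`. Now `u` and `w₁` commute since they lie in different factors,
while the conjugate of `u` by `v` is `(u, 1)`, so on the first factor the composite is the identity
of `G`.
-/

/-- The holomorph of a group: the semidirect product with its full automorphism group, in which
every automorphism becomes conjugation by an element. -/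
abbrev Holomorph (N : Type*) [Group N] : Type _ :=
  N ⋊[MonoidHom.id (MulAut N)] MulAut N

namespace Holomorph

open SemidirectProduct

variable {N : Type*} [Group N]

theorem inr_mul_inl_mul_inr_inv (σ : MulAut N) (n : N) :
    (inr σ * inl n * (inr σ)⁻¹ : Holomorph N) = inl (σ n) := by
  rw [← map_inv]
  exact (inl_aut (φ := MonoidHom.id (MulAut N)) σ n).symm

theorem commute_inl_inr {σ : MulAut N} {n : N} (hn : σ n = n) :
    Commute (inl n : Holomorph N) (inr σ) := by
  have hconj := inr_mul_inl_mul_inr_inv σ n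
  rw [hn, mul_inv_eq_iff_eq_mul] at hconj
  exact hconj.symm

end Holomorph

/-- The graph `C` with one new vertex `none`, joined to exactly the vertices in `K`. -/
def coneOver {V : Type*} (C : SimpleGraph V) (K : Set V) : SimpleGraph (Option V) where
  Adj
    | some a, some b => C.Adj a b
    | some a, none => a ∈ K
    | none, some b => b ∈ K
    | none, none => False
  symm := ⟨by rintro (_ | a) (_ | b) hab <;> first | exact hab | exact C.adj_symm hab⟩
  loopless := ⟨by rintro (_ | a) haa <;> first | exact haa | exact C.irrefl haa⟩

namespace RAAG

open PresentedGroup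

variable {V : Type}

section UniversalProperty

variable {H : Type*} [Group H] {C : SimpleGraph V}

theorem commute_of_adj {a b : V} (hab : C.Adj a b) :
    Commute (of a : RAAG C) (of b) :=
  commutatorElement_eq_one_iff_commute.mp <|
    one_of_mem (rels := raagRels C) ⟨a, b, hab, rfl⟩

/-- The homomorphism out of a right-angled Artin group determined by images of the generators that
commute along the edges. -/
def lift (f : V → H) (hf : ∀ a b, C.Adj a b → Commute (f a) (f b)) : RAAG C →* H :=
  toGroup (f := f) <| by
    rintro _ ⟨a, b, hab, rfl⟩
    simp only [map_mul, map_inv, FreeGroup.lift_apply_of]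
    exact commutatorElement_eq_one_iff_commute.mpr (hf a b hab)

@[simp]
theorem lift_of (f : V → H) (hf : ∀ a b, C.Adj a b → Commute (f a) (f b)) (a : V) :
    lift f hf (of a) = f a :=
  toGroup.of _

end UniversalProperty

section Erase

variable {C D : SimpleGraph V} {S : Set V}

open Classical in
/-- The homomorphism killing the generators in `S` and fixing the others. The two graphs may differ
on the edges that meet `S`, and `D` may have further edges. -/
noncomputable def eraseHom (S : Set V) (hCD : ∀ a ∉ S, ∀ b ∉ S, C.Adj a b → D.Adj a b) :
    RAAG C →* RAAG D :=
  lift (fun a => if a ∈ S then 1 else of a) fun a b hab => by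
    split_ifs with ha hb hb
    · exact Commute.one_left _
    · exact Commute.one_left _
    · exact Commute.one_right _
    · exact commute_of_adj (hCD a ha b hb hab)

theorem eraseHom_of_mem (hCD : ∀ a ∉ S, ∀ b ∉ S, C.Adj a b → D.Adj a b) {a : V} (ha : a ∈ S) :
    eraseHom S hCD (of a) = 1 := by
  rw [eraseHom, lift_of, if_pos ha]

theorem eraseHom_of_notMem (hCD : ∀ a ∉ S, ∀ b ∉ S, C.Adj a b → D.Adj a b) {a : V} (ha : a ∉ S) :
    eraseHom S hCD (of a) = of a := by
  rw [eraseHom, lift_of, if_neg ha]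

end Erase

section Cone

variable {H : Type*} [Group H] {C : SimpleGraph V} {K : Set V}

/-- The homomorphism out of the right-angled Artin group of a cone that extends `f` and sends the
new generator to `h`; this group is the HNN extension of `RAAG C` whose stable letter
centralizes the generators in `K`. -/
def coneLift (f : RAAG C →* H) (h : H) (hf : ∀ a ∈ K, Commute (f (of a)) h) :
    RAAG (coneOver C K) →* H :=
  lift (fun x => x.elim h fun a => f (of a)) <| by
    rintro (_ | a) (_ | b) hab
    · exact Commute.refl h
    · exact (hf b hab).symm
    · exact hf a hab
    · exact (commute_of_adj (C := C) hab).map f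

@[simp]
theorem coneLift_of_some (f : RAAG C →* H) (h : H) (hf : ∀ a ∈ K, Commute (f (of a)) h) (a : V) :
    coneLift f h hf (of (some a)) = f (of a) :=
  lift_of _ _ _

@[simp]
theorem coneLift_of_none (f : RAAG C →* H) (h : H) (hf : ∀ a ∈ K, Commute (f (of a)) h) :
    coneLift f h hf (of none) = h :=
  lift_of _ _ _

end Cone

section Conjugation

variable (C : SimpleGraph V) (S T : Set V)

open Classical in
/-- The homomorphism that conjugates the generators in `T` by the cone vertex and fixes the others.
The cone vertex commutes with the generators outside `S ∪ T`, so only the edges between `S` and `T`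
have to be removed from the source. -/
noncomputable def conjHom :
    RAAG (C \ C.between S T) →* RAAG (coneOver C (S ∪ T)ᶜ) :=
  lift (fun a => if a ∈ T then of none * of (some a) * (of none)⁻¹ else of (some a)) <| by
    have commute_some {a b : V} (hab : C.Adj a b) :
        Commute (of (some a) : RAAG (coneOver C (S ∪ T)ᶜ)) (of (some b)) :=
      commute_of_adj hab
    have commute_conj {a b : V} (hab : (C \ C.between S T).Adj a b) (ha : a ∈ T) (hb : b ∉ T) :
        Commute (of none * of (some a) * (of none)⁻¹ : RAAG (coneOver C (S ∪ T)ᶜ))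
          (of (some b)) := by
      have hbS : b ∉ S := fun hbS => hab.2 ⟨hab.1, Or.inr ⟨ha, hbS⟩⟩
      have hvb : Commute (of none : RAAG (coneOver C (S ∪ T)ᶜ)) (of (some b)) :=
        commute_of_adj (not_or.mpr ⟨hbS, hb⟩)
      exact (hvb.mul_left (commute_some hab.1)).mul_left hvb.inv_left
    intro a b hab
    split_ifs with ha hb hb
    · exact SemiconjBy.conj_iff.mpr (commute_some hab.1)
    · exact commute_conj hab ha hb
    · exact (commute_conj hab.symm hb ha).symm
    · exact commute_some hab.1

variable {S T}

theorem conjHom_of_mem {a : V} (ha : a ∈ T) :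
    conjHom C S T (of a) = of none * of (some a) * (of none)⁻¹ := by
  rw [conjHom, lift_of, if_pos ha]

theorem conjHom_of_notMem {a : V} (ha : a ∉ T) :
    conjHom C S T (of a) = of (some a) := by
  rw [conjHom, lift_of, if_neg ha]

variable (S T)

/-- The homomorphism to `G × G`, where `G` lacks the edges between `S` and `T`, that sends the
generators in `S` to the first factor, those in `T` to the second, and the others diagonally. -/
noncomputable def splitHom :
    RAAG C →* RAAG (C \ C.between S T) × RAAG (C \ C.between S T) :=
  MonoidHom.prod
    (eraseHom T fun _ ha _ hb hab => ⟨hab, fun h => h.2.elim (hb ·.2) (ha ·.1)⟩)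
    (eraseHom S fun _ ha _ hb hab => ⟨hab, fun h => h.2.elim (ha ·.1) (hb ·.2)⟩)

variable {S T}

theorem splitHom_of_mem_left (hST : Disjoint S T) {a : V} (ha : a ∈ S) :
    splitHom C S T (of a) = (of a, 1) :=
  Prod.ext (eraseHom_of_notMem _ (hST.notMem_of_mem_left ha)) (eraseHom_of_mem _ ha)

theorem splitHom_of_mem_right (hST : Disjoint S T) {a : V} (ha : a ∈ T) :
    splitHom C S T (of a) = (1, of a) :=
  Prod.ext (eraseHom_of_mem _ ha) (eraseHom_of_notMem _ (hST.notMem_of_mem_right ha))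

theorem splitHom_of_notMem_union {a : V} (ha : a ∉ S ∪ T) :
    splitHom C S T (of a) = (of a, of a) :=
  Prod.ext (eraseHom_of_notMem _ fun haT => ha (Or.inr haT))
    (eraseHom_of_notMem _ fun haS => ha (Or.inl haS))

variable (S T)

/-- The extension of `splitHom` that sends the cone vertex to the swap of the two factors of
`G × G`; the wreath product of `G` with a group of order two is realized inside the holomorph of
`G × G`. -/
noncomputable def wreathHom :
    RAAG (coneOver C (S ∪ T)ᶜ) →*
      Holomorph (RAAG (C \ C.between S T) × RAAG (C \ C.between S T)) :=
  coneLift (SemidirectProduct.inl.comp (splitHom C S T)) (SemidirectProduct.inr MulEquiv.prodComm)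
    fun a ha => Holomorph.commute_inl_inr <| by
      rw [splitHom_of_notMem_union C ha]
      rfl

theorem wreathHom_of_some (a : V) :
    wreathHom C S T (of (some a)) = SemidirectProduct.inl (splitHom C S T (of a)) :=
  coneLift_of_some _ _ _ _

theorem wreathHom_of_none :
    wreathHom C S T (of none) = SemidirectProduct.inr MulEquiv.prodComm :=
  coneLift_of_none _ _ _

variable {S T}

theorem wreathHom_comp_conjHom (hST : Disjoint S T) :
    (wreathHom C S T).comp (conjHom C S T) =
      SemidirectProduct.inl.comp
        ((MonoidHom.id _).prod (eraseHom (S ∪ T) fun _ _ _ _ hab => hab)) := by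
  refine PresentedGroup.ext fun a => ?_
  simp only [MonoidHom.comp_apply, MonoidHom.prod_apply, MonoidHom.id_apply]
  by_cases haT : a ∈ T
  · rw [conjHom_of_mem C haT, map_mul, map_mul, map_inv, wreathHom_of_none, wreathHom_of_some,
      Holomorph.inr_mul_inl_mul_inr_inv, splitHom_of_mem_right C hST haT,
      eraseHom_of_mem _ (Set.mem_union_right S haT)]
    rfl
  · rw [conjHom_of_notMem C haT, wreathHom_of_some]
    by_cases haS : a ∈ S
    · rw [splitHom_of_mem_left C hST haS, eraseHom_of_mem _ (Set.mem_union_left T haS)]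
    · have ha : a ∉ S ∪ T := not_or.mpr ⟨haS, haT⟩
      rw [splitHom_of_notMem_union C ha, eraseHom_of_notMem _ ha]

theorem conjHom_injective (hST : Disjoint S T) : Function.Injective (conjHom C S T) := by
  have h : Function.Injective ((wreathHom C S T).comp (conjHom C S T)) := by
    rw [wreathHom_comp_conjHom C hST]
    exact SemidirectProduct.inl_injective.comp fun _ _ hxy => congrArg Prod.fst hxy
  exact Function.Injective.of_comp h

end Conjugation

end RAAG

section PlusGraph

variable {V : Type} {Λ : SimpleGraph V} {u w₁ w₂ : V}

theorem plusGraph_adj_some_some (hne : w₁ ≠ w₂) (h2 : Λ.Adj u w₂) {a b : V} :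
    (PlusGraph Λ u w₁ w₂).Adj (some a) (some b) ↔ (Λ \ edge u w₁).Adj a b := by
  have hab := Λ.adj_comm a b
  have ne_of_adj : Λ.Adj a b → a ≠ b := Adj.ne
  have hu : u ≠ w₂ := h2.ne
  have hw₂ := h2.symm
  simp only [PlusGraph, MinusGraph, fromRel_adj, Option.some.injEq, sdiff_adj, edge_adj]
  grind

theorem plusGraph_adj_some_none {a : V} :
    (PlusGraph Λ u w₁ w₂).Adj (some a) none ↔ a ∈ ({w₁, w₂} ∪ {u} : Set V) := by
  simp only [PlusGraph, MinusGraph, fromRel_adj, reduceCtorEq, Option.some.injEq,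
    Set.mem_union, Set.mem_insert_iff, Set.mem_singleton_iff]
  grind

theorem plusGraph_compl (hne : w₁ ≠ w₂) (h2 : Λ.Adj u w₂) :
    (PlusGraph Λ u w₁ w₂)ᶜ = coneOver (Λᶜ ⊔ edge u w₁) ({w₁, w₂} ∪ {u})ᶜ := by
  ext (_ | a) (_ | b)
  · simp [coneOver]
  · simp [coneOver, adj_comm _ none, plusGraph_adj_some_none]
  · simp [coneOver, plusGraph_adj_some_none]
  · have ne_of_edge : (edge u w₁).Adj a b → a ≠ b := Adj.ne
    simp only [coneOver, compl_adj, sup_adj, ne_eq, Option.some.injEq,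
      plusGraph_adj_some_some hne h2, sdiff_adj]
    tauto

theorem compl_sup_edge_sdiff_between (h1 : Λ.Adj u w₁) (h2 : Λ.Adj u w₂) :
    (Λᶜ ⊔ edge u w₁) \ (Λᶜ ⊔ edge u w₁).between {w₁, w₂} {u} = Λᶜ := by
  have hw₁ := h1.symm
  have hw₂ := h2.symm
  ext a b
  simp only [sdiff_adj, between_adj, sup_adj, compl_adj, edge_adj, Set.mem_insert_iff,
    Set.mem_singleton_iff]
  grind

end PlusGraph

theorem statement15_general {V : Type} (Λ : SimpleGraph V) (u w₁ w₂ : V) (hne : w₁ ≠ w₂)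
    (h1 : Λ.Adj u w₁) (h2 : Λ.Adj u w₂) :
    ∃ φ : GG Λ →* GG (PlusGraph Λ u w₁ w₂), Function.Injective φ := by
  have hdisj : Disjoint ({w₁, w₂} : Set V) {u} := by
    simp [h1.ne, h2.ne]
  unfold GG
  rw [← compl_sup_edge_sdiff_between h1 h2, plusGraph_compl hne h2]
  exact ⟨_, RAAG.conjHom_injective _ hdisj⟩

/-- `G(Λ)` embeds into `G(Λ_u⁺(w₁,w₂))`. -/
theorem statement15 {V : Type} [Fintype V] (Λ : SimpleGraph V) (u w₁ w₂ : V)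
    (hdeg : 2 ≤ (Λ.neighborSet u).ncard) (hne : w₁ ≠ w₂)
    (h1 : Λ.Adj u w₁) (h2 : Λ.Adj u w₂) :
    ∃ φ : GG Λ →* GG (PlusGraph Λ u w₁ w₂), Function.Injective φ :=
  statement15_general Λ u w₁ w₂ hne h1 h2
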